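/- For every r ≥ 1 there exist pairwise disjoint lines in ℙ³ with ideals P₁,…,P_r and a linear form L ∈ [R]₁ such that, for the Hartshorne–Rao module M(C) of their union C, the multiplication map ×L³ : [M(C)]_{t−3} → [M(C)]_t has maximal rank (is injective or surjective) for every integer t. (Existential formulation of: for a general union of r skew lines, multiplication by the cube of a general linear form on M(C) has maximal rank in every degree.) -/

import Mathlib

/-! Take `L = x₃`.  Applying the snake lemma to multiplication by `x₃³` on the defining sequence
`R → ⊕ R/Pᵢ → M(C) → 0`, the map `×L³ : M(C)_{T-3} → M(C)_T` is injective (surjective) as soon as the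
restriction map `φ_T : [R/x₃³]_T → ⊕ [R/(Pᵢ, x₃³)]_T` is (`maxRankPow`).  The problem therefore
becomes an interpolation problem: do `r` general lines impose independent conditions, or as many as
possible, on forms of degree `T` modulo `x₃³`?  For `T ≥ 2` each line imposes three conditions, and
`dim [R/x₃³]_T = 3 m + 1` with `m = T (T + 1) / 2`.  It is enough to find `m` lines with `φ_T`
surjective: fewer lines are then a subfamily, while the kernel of `φ_T` for the `m` lines is at most
one-dimensional and is killed by one more line (`SurjAt.exists_injAt`).

The `m` lines are built by induction from `T` to `T + 2` (`SurjAt.add_ruling`), adding `2 T + 3`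
lines of one ruling of the quadric `x₀ x₂ = x₁ (x₁ + x₃) + d x₀²`.  By residuation along the quadric
it suffices that these lines impose independent conditions modulo `x₃³` on forms of degree `T + 2`
(`surjAt_ruling`).  The line with parameter `a` carries the jets of `aᵖ (a + x₃)^q`,
`p, q ≤ T + 2`.  Their second differences, first differences and values produce all jets
`aⁿ`, `aⁿ x₃`, `aⁿ x₃²` of low exponent; Lagrange interpolation in `a` and the nonvanishing of a
binomial coefficient, where characteristic zero is used, give the rest.  The induction starts from the
empty configuration for `T = 0` and from six explicit lines for `T = 3`.

Finally, surjectivity and injectivity of `φ_T` and skewness are each implied by the nonvanishing of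
a nonzero polynomial in the parameters of the lines (`Gen`), and surjectivity passes from `T` to
`T + 1`, so only finitely many degrees matter and one configuration works for all (`exists_config`).
-/

open MvPolynomial Module

noncomputable section

variable {K : Type} [Field K]

abbrev Rp (K : Type) [Field K] := MvPolynomial (Fin 4) K

/-- The product of the coordinate rings of the lines. -/
abbrev Dmod (K : Type) [Field K] {ι : Type} (P : ι → Ideal (Rp K)) :=
  (i : ι) → (Rp K ⧸ P i)

/-- The natural map `R → ⊕ᵢ R/Pᵢ`. -/
def Phi {ι : Type} (P : ι → Ideal (Rp K)) : Rp K →ₗ[Rp K] Dmod K P :=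
  LinearMap.pi fun i => (P i).mkQ

/-- The Hartshorne–Rao module of the union of the (disjoint) lines with ideals `Pᵢ`:
the cokernel of `R → ⊕ᵢ R/Pᵢ`. -/
abbrev HRmod {ι : Type} (P : ι → Ideal (Rp K)) :=
  Dmod K P ⧸ LinearMap.range (Phi P)

/-- The degree-`t` component `[M(C)]_t = coker([R]_t → ⊕ᵢ [R/Pᵢ]_t)` of the
Hartshorne–Rao module, realized as a `K`-subspace of the cokernel module. -/
def HRcomp {ι : Type} (P : ι → Ideal (Rp K)) (t : ℕ) : Submodule K (HRmod P) :=
  Submodule.map ((LinearMap.range (Phi P)).mkQ.restrictScalars K)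
    (Submodule.pi Set.univ fun i =>
      Submodule.map (((P i).mkQ).restrictScalars K) (homogeneousSubmodule (Fin 4) K t))

/-- `×L^m : [M(C)]_{t-m} → [M(C)]_t` has maximal rank (is injective or surjective)
for every integer `t` (in degrees where the source is zero this is automatic). -/
def MaxRankPow {ι : Type} (P : ι → Ideal (Rp K)) (L : Rp K) (m : ℕ) : Prop :=
  ∀ t : ℕ,
    (∀ x ∈ HRcomp P t, (L ^ m) • x = 0 → x = 0) ∨
    (∀ y ∈ HRcomp P (t + m), ∃ x ∈ HRcomp P t, (L ^ m) • x = y)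

/-! ### Restriction to lines modulo the cube of a plane -/

/-- Restriction to a line, in an affine coordinate.  The vector `q = (a, b, u, v)` encodes the line
`x₁ = a x₀ + u x₃`, `x₂ = b x₀ + v x₃`, and `ev q F` is `F` restricted to the affine chart `x₀ = 1`
of that line, with coordinate `X = x₃`. -/
def ev (q : Fin 4 → K) : Rp K →ₐ[K] Polynomial K :=
  aeval ![1, Polynomial.C (q 0) + Polynomial.C (q 2) * Polynomial.X,
    Polynomial.C (q 1) + Polynomial.C (q 3) * Polynomial.X, Polynomial.X]

@[simp] lemma ev_X0 (q : Fin 4 → K) : ev q (X 0) = 1 := by simp [ev]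
@[simp] lemma ev_X1 (q : Fin 4 → K) :
    ev q (X 1) = Polynomial.C (q 0) + Polynomial.C (q 2) * Polynomial.X := by simp [ev]
@[simp] lemma ev_X2 (q : Fin 4 → K) :
    ev q (X 2) = Polynomial.C (q 1) + Polynomial.C (q 3) * Polynomial.X := by simp [ev]
@[simp] lemma ev_X3 (q : Fin 4 → K) : ev q (X 3) = Polynomial.X := by simp [ev]
@[simp] lemma ev_C (q : Fin 4 → K) (a : K) : ev q (C a) = Polynomial.C a := by
  rw [← MvPolynomial.algebraMap_eq, AlgHom.commutes]; rfl

/-- The degree-`T` jets along a family of lines: all families of polynomials which agree modulo `X³`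
with the restrictions of a single form of degree `T`. -/
def jetImage (T : ℕ) {ι : Type} (c : ι → Fin 4 → K) : Submodule K (ι → Polynomial K) where
  carrier := {τ | ∃ F : Rp K, F.IsHomogeneous T ∧ ∀ i, Polynomial.X ^ 3 ∣ ev (c i) F - τ i}
  zero_mem' := ⟨0, isHomogeneous_zero _ _ _, fun i => by simp⟩
  add_mem' := by
    rintro τ σ ⟨F, hF, hF'⟩ ⟨G, hG, hG'⟩
    refine ⟨F + G, hF.add hG, fun i => ?_⟩
    have := dvd_add (hF' i) (hG' i)
    simp only [map_add, Pi.add_apply]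
    convert this using 1
    ring
  smul_mem' := by
    rintro a τ ⟨F, hF, hF'⟩
    refine ⟨C a * F, hF.C_mul a, fun i => ?_⟩
    have := (hF' i).mul_left (Polynomial.C a)
    simp only [map_mul, Pi.smul_apply, ev_C, Polynomial.smul_eq_C_mul]
    convert this using 1
    ring

/-- Forms of degree `T` restrict onto the product of the coordinate rings of the length-three
schemes cut out on the lines by the triple plane `x₃³ = 0`. -/
def SurjAt (T : ℕ) {ι : Type} (c : ι → Fin 4 → K) : Prop :=
  ∀ τ : ι → Polynomial K, ∃ F : Rp K, F.IsHomogeneous T ∧ ∀ i, Polynomial.X ^ 3 ∣ ev (c i) F - τ i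

/-- A form of degree `T` vanishing on the length-three schemes cut out on the lines by the
triple plane `x₃³ = 0` is a multiple of `x₃³`. -/
def InjAt (T : ℕ) {ι : Type} (c : ι → Fin 4 → K) : Prop :=
  ∀ F : Rp K, F.IsHomogeneous T → (∀ i, Polynomial.X ^ 3 ∣ ev (c i) F) → X 3 ^ 3 ∣ F

lemma surjAt_iff {T : ℕ} {ι : Type} {c : ι → Fin 4 → K} :
    SurjAt T c ↔ ∀ τ, τ ∈ jetImage T c := Iff.rfl

lemma jetImage_congr {T : ℕ} {ι : Type} {c : ι → Fin 4 → K} {τ σ : ι → Polynomial K}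
    (h : τ ∈ jetImage T c) (hd : ∀ i, Polynomial.X ^ 3 ∣ τ i - σ i) : σ ∈ jetImage T c := by
  obtain ⟨F, hF, hF'⟩ := h
  refine ⟨F, hF, fun i => ?_⟩
  have := dvd_add (hF' i) (hd i)
  convert this using 1
  ring

/-- The three-term Taylor truncation of a polynomial. -/
lemma X_cube_dvd_sub_jet (p : Polynomial K) :
    Polynomial.X ^ 3 ∣ (Polynomial.C (p.coeff 0) + Polynomial.C (p.coeff 1) * Polynomial.X
      + Polynomial.C (p.coeff 2) * Polynomial.X ^ 2) - p := by
  rw [Polynomial.X_pow_dvd_iff]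
  intro d hd
  interval_cases d <;> simp [Polynomial.coeff_X, Polynomial.coeff_C, Polynomial.coeff_X_pow]

lemma surjAt_of_jets {T : ℕ} {ι : Type} {c : ι → Fin 4 → K}
    (h : ∀ w₀ w₁ w₂ : ι → K, (fun i => Polynomial.C (w₀ i) + Polynomial.C (w₁ i) * Polynomial.X
      + Polynomial.C (w₂ i) * Polynomial.X ^ 2) ∈ jetImage T c) : SurjAt T c := by
  intro τ
  exact jetImage_congr (h (fun i => (τ i).coeff 0) (fun i => (τ i).coeff 1)
    (fun i => (τ i).coeff 2)) fun i => X_cube_dvd_sub_jet _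

lemma isHomogeneous_X0 : (X 0 : Rp K).IsHomogeneous 1 := isHomogeneous_X _ _

lemma SurjAt.succ {T : ℕ} {ι : Type} {c : ι → Fin 4 → K} (h : SurjAt T c) :
    SurjAt (T + 1) c := by
  intro τ
  obtain ⟨F, hF, hF'⟩ := h τ
  exact ⟨F * X 0, hF.mul (isHomogeneous_X _ _), fun i => by simpa using hF' i⟩

lemma SurjAt.mono {T S : ℕ} {ι : Type} {c : ι → Fin 4 → K} (h : SurjAt T c) (hTS : T ≤ S) :
    SurjAt S c := by
  induction S, hTS using Nat.le_induction with
  | base => exact h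
  | succ n _ ih => exact ih.succ

lemma SurjAt.comp {T : ℕ} {ι κ : Type} {c : ι → Fin 4 → K} (h : SurjAt T c) {e : κ → ι}
    (he : Function.Injective e) : SurjAt T (c ∘ e) := by
  intro τ
  obtain ⟨F, hF, hF'⟩ := h (Function.extend e τ 0)
  refine ⟨F, hF, fun i => ?_⟩
  simpa [he.extend_apply] using hF' (e i)

/-! ### Lines in a ruling of a quadric -/

/-- Truncated binomial expansion; the factor `A²` avoids negative exponents. -/
lemma binomial_jet {R : Type*} [CommRing R] (A Y : R) (q : ℕ) : ∃ w, A ^ 2 * (A + Y) ^ q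
    = A ^ (q + 2) + q * A ^ (q + 1) * Y + (q.choose 2 : ℕ) * A ^ q * Y ^ 2 + Y ^ 3 * w := by
  induction q with
  | zero => exact ⟨0, by simp⟩
  | succ q ih =>
    obtain ⟨w, hw⟩ := ih
    refine ⟨w * (A + Y) + (q.choose 2 : ℕ) * A ^ q, ?_⟩
    have h2 : ((q + 1).choose 2 : ℕ) = q + q.choose 2 := by
      rw [Nat.choose_succ_succ' q 1, Nat.choose_one_right]
    rw [pow_succ (A + Y), ← mul_assoc, hw, h2]
    push_cast
    ring

/-- The same expansion to second order. -/
lemma binomial_jet' {R : Type*} [CommRing R] (A Y : R) (q : ℕ) : ∃ w, A * (A + Y) ^ q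
    = A ^ (q + 1) + q * A ^ q * Y + Y ^ 2 * w := by
  induction q with
  | zero => exact ⟨0, by simp⟩
  | succ q ih =>
    obtain ⟨w, hw⟩ := ih
    refine ⟨w * (A + Y) + q * A ^ q, ?_⟩
    rw [pow_succ (A + Y), ← mul_assoc, hw]
    push_cast
    ring

/-- The line with parameter `a` in a ruling of the quadric `x₀ x₂ = x₁ (x₁ + x₃) + d x₀²`. -/
def rulingLine (d a : K) : Fin 4 → K := ![a, a ^ 2 + d, 0, a]

lemma bihom_mem {ι : Type} (T p q : ℕ) (hp : p ≤ T) (hq : q ≤ T) (a : ι → K) (d : K) :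
    (fun i => Polynomial.C (a i) ^ p * (Polynomial.C (a i) + Polynomial.X) ^ q) ∈
      jetImage T (fun i => rulingLine d (a i)) := by
  have h1 : (X 2 - C d * X 0 : Rp K).IsHomogeneous 1 :=
    (isHomogeneous_X _ _).sub ((isHomogeneous_X _ _).C_mul _)
  have h2 : (X 1 + X 3 : Rp K).IsHomogeneous 1 := (isHomogeneous_X _ _).add (isHomogeneous_X _ _)
  have h3 : (X 1 : Rp K).IsHomogeneous 1 := isHomogeneous_X _ _
  have h0 : (X 0 : Rp K).IsHomogeneous 1 := isHomogeneous_X _ _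
  -- in the ruling coordinates `a` and `a + x₃`, the form `x₂ - d x₀` is the product `a (a + x₃)`
  rcases le_total p q with h | h
  · obtain ⟨e, rfl⟩ := Nat.exists_eq_add_of_le h
    obtain ⟨f, rfl⟩ := Nat.exists_eq_add_of_le hq
    refine ⟨(X 2 - C d * X 0) ^ p * (X 1 + X 3) ^ e * X 0 ^ f, ?_, fun i => ?_⟩
    · simpa using ((h1.pow p).mul (h2.pow e)).mul (h0.pow f)
    · have hQ : ev (rulingLine d (a i)) (X 2 - C d * X 0)
          = Polynomial.C (a i) * (Polynomial.C (a i) + Polynomial.X) := by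
        simp [rulingLine]
        ring
      rw [map_mul, map_mul, map_pow, map_pow, map_pow, hQ, mul_pow]
      convert dvd_zero _ using 1
      simp [rulingLine]
      ring
  · obtain ⟨e, rfl⟩ := Nat.exists_eq_add_of_le h
    obtain ⟨f, rfl⟩ := Nat.exists_eq_add_of_le hp
    refine ⟨(X 2 - C d * X 0) ^ q * X 1 ^ e * X 0 ^ f, ?_, fun i => ?_⟩
    · simpa using ((h1.pow q).mul (h3.pow e)).mul (h0.pow f)
    · have hQ : ev (rulingLine d (a i)) (X 2 - C d * X 0)
          = Polynomial.C (a i) * (Polynomial.C (a i) + Polynomial.X) := by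
        simp [rulingLine]
        ring
      rw [map_mul, map_mul, map_pow, map_pow, map_pow, hQ, mul_pow]
      convert dvd_zero _ using 1
      simp [rulingLine]
      ring

/-- Lagrange interpolation inside a submodule of jets. -/
lemma interp_mem {ι : Type} [Fintype ι] {a : ι → K} (ha : Function.Injective a)
    (S : Submodule K (ι → Polynomial K)) (j : ℕ)
    (h : ∀ n < Fintype.card ι, (fun i => Polynomial.C (a i) ^ n * Polynomial.X ^ j) ∈ S)
    (w : ι → K) : (fun i => Polynomial.C (w i) * Polynomial.X ^ j) ∈ S := by
  classical
  set P := Lagrange.interpolate Finset.univ a w with hP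
  have hdeg : P.degree < Fintype.card ι := by
    rw [← Finset.card_univ]
    exact Lagrange.degree_interpolate_lt (s := Finset.univ) (v := a) w ha.injOn
  have : (fun i => Polynomial.C (w i) * Polynomial.X ^ j) =
      ∑ n ∈ Finset.range (Fintype.card ι),
        P.coeff n • (fun i => Polynomial.C (a i) ^ n * Polynomial.X ^ j) := by
    funext i
    have hw : P.eval (a i) = w i :=
      Lagrange.eval_interpolate_at_node w ha.injOn (Finset.mem_univ i)
    rw [← hw]
    rcases Nat.eq_zero_or_pos (Fintype.card ι) with h0 | h0
    · exact ((Fintype.card_eq_zero_iff.mp h0).false i).elim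
    have hnat : P.natDegree < Fintype.card ι := by
      by_cases hP0 : P = 0
      · simpa [hP0] using h0
      · exact (Polynomial.natDegree_lt_iff_degree_lt hP0).mpr hdeg
    rw [Polynomial.eval_eq_sum_range' hnat]
    simp [Finset.sum_mul, Polynomial.smul_eq_C_mul, mul_assoc]
  rw [this]
  exact Submodule.sum_mem _ fun n hn => S.smul_mem _ (h n (Finset.mem_range.mp hn))

/-- `2 N + 3` lines in a ruling of a smooth quadric impose independent conditions modulo `x₃³` on
forms of degree `N + 2`.  The Taylor coefficients of `aᵖ (a + x₃)^q`, `p, q ≤ N + 2`, span all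
triples of functions on the `2 N + 3` parameters. -/
lemma surjAt_ruling [CharZero K] {ι : Type} [Fintype ι] (N : ℕ) (hι : Fintype.card ι = 2 * N + 3)
    {a : ι → K} (ha : Function.Injective a) (d : K) :
    SurjAt (N + 2) (fun i => rulingLine d (a i)) := by
  set S := jetImage (N + 2) (fun i => rulingLine d (a i)) with hS
  -- the jet `aⁿ Xʲ`
  let B : ℕ → ℕ → ι → Polynomial K := fun n j i => Polynomial.C (a i) ^ n * Polynomial.X ^ j
  have hb := fun p q hp hq => bihom_mem (N + 2) p q hp hq a d
  have hz : ∀ (τ : ι → Polynomial K) {σ : ι → Polynomial K}, τ ∈ S →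
      (∀ i, Polynomial.X ^ 3 ∣ τ i - σ i) → σ ∈ S := fun τ σ h h' => jetImage_congr h h'
  have scale : ∀ (m : ℕ) (τ : ι → Polynomial K), m ≠ 0 → (m : K) • τ ∈ S → τ ∈ S := by
    intro m τ hm h
    have := S.smul_mem ((m : K)⁻¹) h
    rwa [smul_smul, inv_mul_cancel₀ (Nat.cast_ne_zero.mpr hm), one_smul] at this
  -- second differences of `aᵖ (a + X)^q` in `q`
  have h2 : ∀ n ≤ 2 * N, B n 2 ∈ S := by
    intro n hn
    obtain ⟨p, q, hp, hq, rfl⟩ : ∃ p q, p ≤ N ∧ q ≤ N ∧ n = p + q :=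
      ⟨min n N, n - min n N, by omega, by omega, by omega⟩
    have := S.add_mem (S.sub_mem (hb p (q + 2) (by omega) (by omega))
      (S.smul_mem (2 : K) (hb (p + 1) (q + 1) (by omega) (by omega))))
      (hb (p + 2) q (by omega) (by omega))
    refine hz _ this fun i => ?_
    obtain ⟨w, hw⟩ := binomial_jet' (Polynomial.C (a i)) Polynomial.X q
    obtain ⟨w', hw'⟩ := sub_dvd_pow_sub_pow (Polynomial.C (a i) + Polynomial.X)
      (Polynomial.C (a i)) q
    have hw'' : (Polynomial.C (a i) + Polynomial.X) ^ q
        = Polynomial.C (a i) ^ q + Polynomial.X * w' := by linear_combination hw'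
    refine ⟨Polynomial.C (a i) ^ p * w', ?_⟩
    simp only [Pi.add_apply, Pi.sub_apply, Pi.smul_apply, Polynomial.smul_eq_C_mul, B,
      map_ofNat, pow_succ (Polynomial.C (a i) + Polynomial.X), hw'']
    ring
  -- first differences
  have h1' : ∀ p q, p ≤ N + 1 → q ≤ N + 1 →
      (fun i => Polynomial.C (a i) ^ p * (Polynomial.C (a i) + Polynomial.X) ^ q * Polynomial.X)
        ∈ S := by
    intro p q hp hq
    have := S.sub_mem (hb p (q + 1) (by omega) (by omega)) (hb (p + 1) q (by omega) (by omega))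
    convert this using 1
    funext i
    simp only [Pi.sub_apply]
    ring
  have h1'' : ∀ q ≤ N + 1, B (N + q + 1) 1 + (q : K) • B (N + q) 2 ∈ S := by
    intro q hq
    refine hz _ (h1' (N + 1) q le_rfl hq) fun i => ?_
    obtain ⟨w, hw⟩ := binomial_jet' (Polynomial.C (a i)) Polynomial.X q
    refine ⟨Polynomial.C (a i) ^ N * w, ?_⟩
    simp only [Pi.add_apply, Pi.smul_apply, Polynomial.smul_eq_C_mul, B, map_natCast]
    linear_combination Polynomial.C (a i) ^ N * Polynomial.X * hw
  have h1 : ∀ n ≤ 2 * N + 1, B n 1 ∈ S := by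
    intro n hn
    rcases Nat.lt_or_ge N n with h | h
    · obtain ⟨q, rfl⟩ := Nat.exists_eq_add_of_le (Nat.succ_le_of_lt h)
      have := S.sub_mem (h1'' q (by omega)) (S.smul_mem (q : K) (h2 (N + q) (by omega)))
      rw [add_sub_cancel_right] at this
      rwa [show N.succ + q = N + q + 1 by omega]
    · simpa [B] using h1' n 0 (by omega) (by omega)
  have h0' : ∀ q ≤ N + 2, B (N + q + 2) 0 + (q : K) • B (N + q + 1) 1
      + ((q.choose 2 : ℕ) : K) • B (N + q) 2 ∈ S := by
    intro q hq
    refine hz _ (hb (N + 2) q le_rfl hq) fun i => ?_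
    obtain ⟨w, hw⟩ := binomial_jet (Polynomial.C (a i)) Polynomial.X q
    refine ⟨Polynomial.C (a i) ^ N * w, ?_⟩
    simp only [Pi.add_apply, Pi.smul_apply, Polynomial.smul_eq_C_mul, B, map_natCast]
    linear_combination Polynomial.C (a i) ^ N * hw
  have h0 : ∀ n ≤ 2 * N + 2, B n 0 ∈ S := by
    intro n hn
    rcases Nat.lt_or_ge (N + 1) n with h | h
    · obtain ⟨q, rfl⟩ := Nat.exists_eq_add_of_le (Nat.succ_le_of_lt h)
      have := S.sub_mem (S.sub_mem (h0' q (by omega))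
        (S.smul_mem ((q.choose 2 : ℕ) : K) (h2 (N + q) (by omega))))
        (S.smul_mem (q : K) (h1 (N + q + 1) (by omega)))
      rw [add_sub_cancel_right, add_sub_cancel_right] at this
      rwa [show (N + 1).succ + q = N + q + 2 by omega]
    · simpa [B] using hb n 0 (by omega) (by omega)
  have V0 : ∀ w : ι → K, (fun i => Polynomial.C (w i) * Polynomial.X ^ 0) ∈ S :=
    interp_mem ha S 0 fun n hn => h0 n (by omega)
  have h0all : ∀ n, B n 0 ∈ S := by
    intro n
    simpa [B] using V0 (fun i => a i ^ n)
  -- modulo the jets already obtained, `e1` and `e2` are two relations of degree `2 N + 3` between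
  -- `a ^ (2 N + 2) X` and `a ^ (2 N + 1) X²`; their determinant is, up to sign,
  -- `(N + 1)² - choose (N + 1) 2 = choose (N + 2) 2`
  have e1 := h1'' (N + 1) le_rfl
  have e2 := S.sub_mem (h0' (N + 1) (by omega)) (h0all (N + (N + 1) + 2))
  rw [add_assoc, add_sub_cancel_left] at e2
  have hch : (((N + 2).choose 2 : ℕ) : K) + (((N + 1).choose 2 : ℕ) : K)
      = ((N + 1 : ℕ) : K) ^ 2 := by
    have : (N + 2).choose 2 = N + 1 + (N + 1).choose 2 := by
      rw [Nat.choose_succ_succ' (N + 1) 1, Nat.choose_one_right]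
    have h' := Nat.choose_two_right (N + 1)
    have h'' : 2 * (N + 1).choose 2 = (N + 1) * N := by
      rw [h']
      simpa using Nat.mul_div_cancel' (Nat.even_mul_pred_self (N + 1)).two_dvd
    have h3 : (2 : K) * (((N + 1).choose 2 : ℕ) : K) = (N + 1) * N := by exact_mod_cast h''
    rw [this]
    push_cast
    linear_combination h3
  have hne : (N + 2).choose 2 ≠ 0 := (Nat.choose_pos (by omega)).ne'
  have h2top : B (2 * N + 1) 2 ∈ S := by
    refine scale _ _ hne ?_
    have := S.sub_mem (S.smul_mem ((N + 1 : ℕ) : K) e1) e2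
    convert this using 1
    rw [show N + (N + 1) = 2 * N + 1 by omega, smul_add, add_sub_add_left_eq_sub, smul_smul,
      ← sub_smul]
    congr 1
    linear_combination hch
  have h1top : B (2 * N + 2) 1 ∈ S := by
    have := S.sub_mem e1 (S.smul_mem ((N + 1 : ℕ) : K) h2top)
    rwa [show N + (N + 1) = 2 * N + 1 by omega, add_sub_cancel_right] at this
  have V1 : ∀ w : ι → K, (fun i => Polynomial.C (w i) * Polynomial.X ^ 1) ∈ S := by
    refine interp_mem ha S 1 fun n hn => ?_
    rcases Nat.lt_or_ge n (2 * N + 2) with h | h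
    · exact h1 n (by omega)
    · obtain rfl : n = 2 * N + 2 := by omega
      exact h1top
  have h1all : ∀ n, B n 1 ∈ S := by
    intro n
    simpa [B] using V1 (fun i => a i ^ n)
  have h2top' : B (2 * N + 2) 2 ∈ S := by
    refine scale _ _ hne ?_
    have := S.sub_mem (S.sub_mem (h0' (N + 2) le_rfl) (h0all (N + (N + 2) + 2)))
      (S.smul_mem ((N + 2 : ℕ) : K) (h1all (N + (N + 2) + 1)))
    rw [show N + (N + 2) = 2 * N + 2 by omega] at this
    convert this using 1
    abel
  have V2 : ∀ w : ι → K, (fun i => Polynomial.C (w i) * Polynomial.X ^ 2) ∈ S := by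
    refine interp_mem ha S 2 fun n hn => ?_
    rcases Nat.lt_or_ge n (2 * N + 1) with h | h
    · exact h2 n (by omega)
    · rcases Nat.lt_or_ge n (2 * N + 2) with h' | h'
      · obtain rfl : n = 2 * N + 1 := by omega
        exact h2top
      · obtain rfl : n = 2 * N + 2 := by omega
        exact h2top'
  refine surjAt_of_jets fun w₀ w₁ w₂ => ?_
  have := S.add_mem (S.add_mem (V0 w₀) (V1 w₁)) (V2 w₂)
  convert this using 1
  funext i
  simp

/-- Residuation along a quadric: adding `2 T + 3` lines of a ruling of a quadric whose trace on
`x₃ = 0` avoids the given lines raises the degree by two. -/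
lemma SurjAt.add_ruling [CharZero K] {ι : Type} [Finite ι] {T : ℕ} {c : ι → Fin 4 → K}
    (h : SurjAt T c) : ∃ c' : ι ⊕ Fin (2 * T + 3) → Fin 4 → K, SurjAt (T + 2) c' := by
  have hinf : (Set.univ : Set K).Infinite := Set.infinite_univ
  obtain ⟨d, -, hd⟩ := hinf.exists_notMem_finite
    (Set.finite_range fun i => c i 1 - c i 0 ^ 2)
  let a : Fin (2 * T + 3) → K := fun i => (i : ℕ)
  have ha : Function.Injective a := fun i j hij => Fin.ext (Nat.cast_injective hij)
  refine ⟨Sum.elim c fun i => rulingLine d (a i), fun τ => ?_⟩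
  obtain ⟨F, hF, hF'⟩ := surjAt_ruling T (by simp) ha d (fun i => τ (Sum.inr i))
  let Q : Rp K := X 0 * X 2 - X 1 * (X 1 + X 3) - C d * X 0 ^ 2
  have hX : ∀ i, (X i : Rp K).IsHomogeneous 1 := fun i => isHomogeneous_X _ _
  have hQ : Q.IsHomogeneous 2 :=
    (((hX 0).mul (hX 2)).sub ((hX 1).mul ((hX 1).add (hX 3)))).sub
      (((hX 0).pow 2).C_mul d)
  -- `Q` restricts to a unit modulo `X³` on the old lines
  have hu : ∀ i, ∃ s, Polynomial.X ^ 3 ∣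
      ev (c i) Q * s - (τ (Sum.inl i) - ev (c i) F) := by
    intro i
    have hcop : IsCoprime (ev (c i) Q) (Polynomial.X ^ 3) := by
      refine IsCoprime.pow_right ?_
      rw [isCoprime_comm, (Polynomial.irreducible_X).coprime_iff_not_dvd, Polynomial.X_dvd_iff]
      intro h0
      apply hd
      refine ⟨i, ?_⟩
      rw [Polynomial.coeff_zero_eq_eval_zero] at h0
      simp [Q] at h0
      linear_combination h0
    obtain ⟨u, w, huw⟩ := hcop
    refine ⟨u * (τ (Sum.inl i) - ev (c i) F), -w * (τ (Sum.inl i) - ev (c i) F), ?_⟩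
    linear_combination (τ (Sum.inl i) - ev (c i) F) * huw
  choose s hs using hu
  obtain ⟨G, hG, hG'⟩ := h s
  refine ⟨F + Q * G, hF.add ?_, ?_⟩
  · rw [add_comm T 2]
    exact hQ.mul hG
  · rintro (i | i)
    · have := dvd_add (hs i) ((hG' i).mul_left (ev (c i) Q))
      simp only [Sum.elim_inl, map_add, map_mul]
      convert this using 1
      ring
    · have hQ0 : ev (rulingLine d (a i)) Q = 0 := by
        simp [Q, rulingLine]
        ring
      simpa [hQ0] using hF' i

/-! ### Configurations imposing independent conditions -/

/-- Six lines imposing eighteen independent conditions modulo `x₃³` on cubic forms. -/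
def sixLines : Fin 6 → Fin 4 → K :=
  ![![0, 0, 0, -1], ![1, -1, 0, 0], ![1, 0, 0, 0], ![0, -1, 1, 0], ![-1, 0, 0, 0], ![0, 1, -1, 0]]

set_option maxHeartbeats 1000000 in
/-- The cubic case, by inverting the evaluation matrix on the 19 cubic monomials not divisible by
`x₃³`; here `w j i` is the prescribed coefficient of `Xʲ` on the line `i`, and the factor `2` clears
the denominators of the inverse. -/
lemma sixLines_cubic (w : Fin 3 → Fin 6 → K) : ∃ F : Rp K, F.IsHomogeneous 3 ∧
    ∀ i, Polynomial.X ^ 3 ∣ ev (sixLines i) F - 2 * (Polynomial.C (w 0 i)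
      + Polynomial.C (w 1 i) * Polynomial.X + Polynomial.C (w 2 i) * Polynomial.X ^ 2) := by
  obtain ⟨p, hp⟩ : ∃ p : Fin 3 → Fin 6 → Rp K, ∀ j i, p j i = C (w j i) := ⟨_, fun _ _ => rfl⟩
  obtain ⟨P, hP⟩ : ∃ P : Fin 3 → Fin 6 → Polynomial K, ∀ j i, P j i = Polynomial.C (w j i) :=
    ⟨_, fun _ _ => rfl⟩
  have hp0 : ∀ j i, (p j i).IsHomogeneous 0 := fun j i => hp j i ▸ isHomogeneous_C _ _
  have hev : ∀ q j i, ev q (p j i) = P j i := fun q j i => by rw [hp, hP, ev_C]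
  have hev2 : ∀ q : Fin 4 → K, ev q 2 = 2 := fun q => map_ofNat (ev q) 2
  have hev4 : ∀ q : Fin 4 → K, ev q 4 = 4 := fun q => map_ofNat (ev q) 4
  refine ⟨(2 * p 0 0) * (X 0 ^ 3)
      + (-2 * p 1 0 + p 1 2 + p 1 4) * (X 0 ^ 2 * X 2)
      + (-2 * p 0 0 + p 0 3 + p 0 5) * (X 0 * X 2 ^ 2)
      + (2 * p 1 0 - p 1 2 - p 0 3 - p 1 4 + p 0 5) * (X 2 ^ 3)
      + (-2 * p 0 1 - 2 * p 1 1 - 2 * p 2 1 + p 0 2 + p 2 2 + 2 * p 0 3 + 2 * p 1 3 + 2 * p 2 3 - p 0 4 - p 2 4) * (X 0 ^ 2 * X 1)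
      + (-4 * p 0 0 - 2 * p 2 0 + 2 * p 1 1 + p 0 2 - p 1 2 + 2 * p 2 2 + p 0 3 - p 1 3 - p 2 3 + p 0 4 + p 1 4 + 2 * p 2 4 + p 0 5 - p 1 5 - p 2 5) * (X 0 * X 1 * X 2)
      + (-2 * p 0 0 - 2 * p 2 0 + 2 * p 0 1 + 2 * p 1 1 + 2 * p 2 1 - p 0 2 - p 0 3 - p 1 3 - 2 * p 2 3 + p 0 4 + 2 * p 2 4 + p 0 5 - p 1 5) * (X 1 * X 2 ^ 2)
      + (-2 * p 0 0 + p 0 2 + p 0 4) * (X 0 * X 1 ^ 2)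
      + (2 * p 2 1 + p 1 2 - 2 * p 2 2 - p 2 3 - p 1 4 + p 2 5) * (X 1 ^ 2 * X 2)
      + (2 * p 0 1 + 2 * p 1 1 + 2 * p 2 1 - p 2 2 - 2 * p 0 3 - 2 * p 1 3 - 2 * p 2 3 + p 2 4) * (X 1 ^ 3)
      + (p 1 2 + p 1 4) * (X 0 ^ 2 * X 3)
      + (-2 * p 0 0 - 2 * p 2 0 + p 2 2 + p 0 3 + p 2 4 + p 0 5) * (X 0 * X 2 * X 3)
      + (-4 * p 0 0 - 2 * p 2 0 + 2 * p 1 1 + p 0 2 - 2 * p 1 2 + 2 * p 2 2 + p 0 3 - p 2 3 + p 0 4 + 2 * p 2 4 + p 0 5 - p 2 5) * (X 2 ^ 2 * X 3)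
      + (p 1 2 - p 1 4) * (X 0 * X 1 * X 3)
      + (-2 * p 0 0 + p 0 2 + p 2 2 - p 2 3 + p 0 4 + p 2 4 - p 2 5) * (X 1 * X 2 * X 3)
      + (p 2 2 + p 2 4) * (X 0 * X 3 ^ 2)
      + (-2 * p 2 1 + 2 * p 2 2) * (X 2 * X 3 ^ 2)
      + (p 2 2 - p 2 4) * (X 1 * X 3 ^ 2), ?_, ?_⟩
  · have h2 : (2 : Rp K).IsHomogeneous 0 := by
      rw [← map_ofNat (C : K →+* Rp K) 2]
      exact isHomogeneous_C _ _
    have h4 : (4 : Rp K).IsHomogeneous 0 := by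
      rw [← map_ofNat (C : K →+* Rp K) 4]
      exact isHomogeneous_C _ _
    have hX : ∀ i, (X i : Rp K).IsHomogeneous 1 := fun i => isHomogeneous_X _ _
    have m0 : ∀ {f g : Rp K}, f.IsHomogeneous 0 → g.IsHomogeneous 0 → (f * g).IsHomogeneous 0 :=
      fun hf hg => hf.mul hg
    have m3 : ∀ {f g : Rp K}, f.IsHomogeneous 0 → g.IsHomogeneous 3 → (f * g).IsHomogeneous 3 :=
      fun hf hg => by simpa using hf.mul hg
    have a0 : ∀ {f g : Rp K}, f.IsHomogeneous 0 → g.IsHomogeneous 0 → (f + g).IsHomogeneous 0 :=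
      fun hf hg => hf.add hg
    have s0 : ∀ {f g : Rp K}, f.IsHomogeneous 0 → g.IsHomogeneous 0 → (f - g).IsHomogeneous 0 :=
      fun hf hg => hf.sub hg
    have a3 : ∀ {f g : Rp K}, f.IsHomogeneous 3 → g.IsHomogeneous 3 → (f + g).IsHomogeneous 3 :=
      fun hf hg => hf.add hg
    have x3 : ∀ i, (X i ^ 3 : Rp K).IsHomogeneous 3 := fun i => (hX i).pow 3
    have x21 : ∀ i j, (X i ^ 2 * X j : Rp K).IsHomogeneous 3 := fun i j => ((hX i).pow 2).mul (hX j)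
    have x12 : ∀ i j, (X i * X j ^ 2 : Rp K).IsHomogeneous 3 := fun i j => (hX i).mul ((hX j).pow 2)
    have x111 : ∀ i j k, (X i * X j * X k : Rp K).IsHomogeneous 3 :=
      fun i j k => ((hX i).mul (hX j)).mul (hX k)
    repeat' with_reducible first
      | exact x3 _ | exact x21 _ _ | exact x12 _ _ | exact x111 _ _ _ | apply m3
      | apply a3
    -- the coefficients, homogeneous of degree zero
    all_goals
      repeat' with_reducible first
        | exact hp0 _ _ | exact m0 h2 (hp0 _ _) | exact m0 h2.neg (hp0 _ _)
        | exact m0 h4.neg (hp0 _ _) | apply a0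
        | apply s0
  · simp only [← hP]
    intro i
    fin_cases i
    · refine ⟨-4 * P 0 0 - 2 * P 1 0 - 2 * P 2 0 + 2 * P 1 1 + 2 * P 2 1 + P 0 2 - P 1 2 + 2 * P 0 3 - P 2 3 + P 0 4 + P 1 4 + 2 * P 2 4 - P 2 5, ?_⟩
      simp [sixLines, hev, hev2, hev4]
      ring
    · refine ⟨0, ?_⟩
      simp [sixLines, hev, hev2, hev4]
      ring
    · refine ⟨0, ?_⟩
      simp [sixLines, hev, hev2, hev4]
      ring
    · refine ⟨2 * P 0 1 + 2 * P 1 1 + 2 * P 2 1 - 2 * P 0 3 - 2 * P 1 3 - 2 * P 2 3, ?_⟩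
      simp [sixLines, hev, hev2, hev4]
      ring
    · refine ⟨0, ?_⟩
      simp [sixLines, hev, hev2, hev4]
      ring
    · refine ⟨-2 * P 0 1 - 2 * P 1 1 - 2 * P 2 1 + 2 * P 0 3 + 2 * P 1 3 + 2 * P 2 3, ?_⟩
      simp [sixLines, hev, hev2, hev4]
      ring

lemma surjAt_sixLines [CharZero K] : SurjAt 3 (sixLines : Fin 6 → Fin 4 → K) := by
  refine surjAt_of_jets fun w₀ w₁ w₂ => ?_
  have h : (2 : K) • (fun i => Polynomial.C (w₀ i) + Polynomial.C (w₁ i) * Polynomial.X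
      + Polynomial.C (w₂ i) * Polynomial.X ^ 2) ∈ jetImage 3 (sixLines : Fin 6 → Fin 4 → K) := by
    obtain ⟨F, hF, hF'⟩ := sixLines_cubic ![w₀, w₁, w₂]
    refine ⟨F, hF, fun i => ?_⟩
    have h2 : Polynomial.C (2 : K) = 2 := map_ofNat _ 2
    simpa [Polynomial.smul_eq_C_mul, mul_add, h2] using hF' i
  have := (jetImage 3 (sixLines : Fin 6 → Fin 4 → K)).smul_mem (2⁻¹ : K) h
  rwa [smul_smul, inv_mul_cancel₀ two_ne_zero, one_smul] at this

/-- In every degree `T ≥ 2` some `T (T + 1) / 2` lines impose independent conditions modulo `x₃³`: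
add rulings of quadrics to the empty configuration for even `T`, and to six lines for odd `T`. -/
lemma exists_surjAt [CharZero K] (T : ℕ) (hT : 2 ≤ T) :
    ∃ (ι : Type) (_ : Fintype ι) (c : ι → Fin 4 → K),
      2 * Fintype.card ι = T * (T + 1) ∧ SurjAt T c := by
  have step : ∀ T : ℕ, (∃ (ι : Type) (_ : Fintype ι) (c : ι → Fin 4 → K),
      2 * Fintype.card ι = T * (T + 1) ∧ SurjAt T c) →
      ∃ (ι : Type) (_ : Fintype ι) (c : ι → Fin 4 → K),
      2 * Fintype.card ι = (T + 2) * (T + 2 + 1) ∧ SurjAt (T + 2) c := by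
    rintro T ⟨ι, _, c, hc, h⟩
    obtain ⟨c', hc'⟩ := h.add_ruling
    refine ⟨_, inferInstance, c', ?_, hc'⟩
    rw [Fintype.card_sum, Fintype.card_fin]
    linarith
  have even : ∀ n : ℕ, ∃ (ι : Type) (_ : Fintype ι) (c : ι → Fin 4 → K),
      2 * Fintype.card ι = (2 * n) * (2 * n + 1) ∧ SurjAt (2 * n) c := by
    intro n
    induction n with
    | zero => exact ⟨Empty, inferInstance, fun i => i.elim, by simp,
        fun τ => ⟨0, isHomogeneous_zero _ _ _, fun i => i.elim⟩⟩
    | succ n ih => exact step _ ih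
  have odd : ∀ n : ℕ, ∃ (ι : Type) (_ : Fintype ι) (c : ι → Fin 4 → K),
      2 * Fintype.card ι = (2 * n + 3) * (2 * n + 3 + 1) ∧ SurjAt (2 * n + 3) c := by
    intro n
    induction n with
    | zero => exact ⟨Fin 6, inferInstance, sixLines, by simp, surjAt_sixLines⟩
    | succ n ih => exact step _ ih
  rcases Nat.even_or_odd' T with ⟨n, rfl | rfl⟩
  · exact even n
  · obtain ⟨m, rfl⟩ : ∃ m, n = m + 1 := ⟨n - 1, by omega⟩
    exact odd m

/-! ### Generic configurations -/

/-- `P` holds for all configurations of lines outside a hypersurface in the space of parameters. -/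
def Gen {ι : Type} (P : (ι → Fin 4 → K) → Prop) : Prop :=
  ∃ Δ : MvPolynomial (ι × Fin 4) K, Δ ≠ 0 ∧ ∀ c, eval (fun x => c x.1 x.2) Δ ≠ 0 → P c

lemma Gen.of_eval {ι : Type} {P : (ι → Fin 4 → K) → Prop} (Δ : MvPolynomial (ι × Fin 4) K)
    (c₀ : ι → Fin 4 → K) (h₀ : eval (fun x => c₀ x.1 x.2) Δ ≠ 0)
    (h : ∀ c, eval (fun x => c x.1 x.2) Δ ≠ 0 → P c) : Gen P :=
  ⟨Δ, fun h0 => h₀ (by simp [h0]), h⟩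

lemma Gen.forall_mem {ι κ : Type} (s : Finset κ) {P : κ → (ι → Fin 4 → K) → Prop}
    (h : ∀ k ∈ s, Gen (P k)) : Gen fun c => ∀ k ∈ s, P k c := by
  classical
  choose! Δ h0 hP using h
  refine ⟨∏ k ∈ s, Δ k, Finset.prod_ne_zero_iff.2 h0, fun c hc k hk => hP k hk c ?_⟩
  rw [map_prod] at hc
  exact Finset.prod_ne_zero_iff.1 hc k hk

lemma Gen.and {ι : Type} {P Q : (ι → Fin 4 → K) → Prop} (hP : Gen P) (hQ : Gen Q) :
    Gen fun c => P c ∧ Q c := by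
  obtain ⟨Δ, h0, h⟩ := hP
  obtain ⟨Δ', h0', h'⟩ := hQ
  refine ⟨Δ * Δ', mul_ne_zero h0 h0', fun c hc => ?_⟩
  rw [map_mul] at hc
  exact ⟨h c (left_ne_zero_of_mul hc), h' c (right_ne_zero_of_mul hc)⟩

lemma Gen.exists [Infinite K] {ι : Type} {P : (ι → Fin 4 → K) → Prop} (hP : Gen P) :
    ∃ c, P c := by
  obtain ⟨Δ, h0, h⟩ := hP
  obtain ⟨x, hx⟩ : ∃ x, eval x Δ ≠ 0 := by
    by_contra! hx
    exact h0 (MvPolynomial.funext fun x => by simp [hx x])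
  exact ⟨fun i j => x (i, j), h _ hx⟩

/-- The coefficients of the restriction of a fixed form depend polynomially on the line. -/
lemma exists_coeff_poly {ι : Type} (F : Rp K) (i : ι) (j : ℕ) : ∃ Δ : MvPolynomial (ι × Fin 4) K,
    ∀ c : ι → Fin 4 → K, eval (fun x => c x.1 x.2) Δ = (ev (c i) F).coeff j := by
  let g : Rp K →ₐ[K] Polynomial (MvPolynomial (ι × Fin 4) K) :=
    aeval ![1, Polynomial.C (X (i, 0)) + Polynomial.C (X (i, 2)) * Polynomial.X,
      Polynomial.C (X (i, 1)) + Polynomial.C (X (i, 3)) * Polynomial.X, Polynomial.X]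
  refine ⟨(g F).coeff j, fun c => ?_⟩
  rw [← Polynomial.coeff_map]
  congr 1
  let φ : MvPolynomial (ι × Fin 4) K →ₐ[K] K := aeval (fun x => c x.1 x.2)
  have key : (Polynomial.mapAlgHom φ).comp g = ev (c i) := by
    apply MvPolynomial.algHom_ext
    intro k
    fin_cases k <;> simp [g, φ]
  have := DFunLike.congr_fun key F
  simpa [φ, MvPolynomial.coe_aeval_eq_eval] using this

lemma exists_det_poly {ι n : Type} [Fintype n] [DecidableEq n]
    {A : (ι → Fin 4 → K) → Matrix n n K}
    (h : ∀ x y, ∃ Δ : MvPolynomial (ι × Fin 4) K, ∀ c, eval (fun x => c x.1 x.2) Δ = A c x y) :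
    ∃ Δ : MvPolynomial (ι × Fin 4) K, ∀ c, eval (fun x => c x.1 x.2) Δ = (A c).det := by
  choose Δ hΔ using h
  refine ⟨(Matrix.of Δ).det, fun c => ?_⟩
  rw [RingHom.map_det]
  congr 1
  ext x y
  simp [hΔ]

/-- Independence of the conditions imposed by a configuration is an open condition. -/
lemma SurjAt.gen {T : ℕ} {ι : Type} [Fintype ι] {c₀ : ι → Fin 4 → K} (h : SurjAt T c₀) :
    Gen fun c : ι → Fin 4 → K => SurjAt T c := by
  classical
  have hsingle : ∀ x : ι × Fin 3, ∃ F : Rp K, F.IsHomogeneous T ∧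
      ∀ i, Polynomial.X ^ 3 ∣ ev (c₀ i) F - Pi.single (M := fun _ => Polynomial K) x.1
        (Polynomial.X ^ (x.2 : ℕ)) i := fun x => h _
  choose F hF hF' using hsingle
  -- column `x` records the jets of the form `F x`; at `c₀` this is the identity matrix
  let A : (ι → Fin 4 → K) → Matrix (ι × Fin 3) (ι × Fin 3) K :=
    fun c => Matrix.of fun y x => (ev (c y.1) (F x)).coeff y.2
  obtain ⟨Δ, hΔ⟩ := exists_det_poly (A := A) fun y x => exists_coeff_poly (F x) y.1 y.2
  refine Gen.of_eval Δ c₀ ?_ fun c hc => ?_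
  · have : A c₀ = 1 := by
      ext ⟨i, j⟩ ⟨i', j'⟩
      have := (Polynomial.X_pow_dvd_iff.1 (hF' (i', j') i)) j j.2
      rw [Polynomial.coeff_sub, sub_eq_zero] at this
      simp only [A, Matrix.of_apply, this, Matrix.one_apply, Prod.mk.injEq]
      by_cases hi : i = i'
      · subst hi
        simp [Polynomial.coeff_X_pow, Fin.ext_iff]
      · simp [hi]
    rw [hΔ, this, Matrix.det_one]
    exact one_ne_zero
  · rw [hΔ] at hc
    intro τ
    have hdet : IsUnit (A c).det := isUnit_iff_ne_zero.2 hc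
    let b : ι × Fin 3 → K := (A c)⁻¹.mulVec fun y => (τ y.1).coeff y.2
    have hb : (A c).mulVec b = fun y => (τ y.1).coeff y.2 := by
      rw [Matrix.mulVec_mulVec, Matrix.mul_nonsing_inv _ hdet, Matrix.one_mulVec]
    refine ⟨∑ x, C (b x) * F x, IsHomogeneous.sum _ _ _ fun x _ => (hF x).C_mul _, fun i => ?_⟩
    rw [Polynomial.X_pow_dvd_iff]
    intro d hd
    have := congr_fun hb (i, ⟨d, hd⟩)
    simp only [Matrix.mulVec, dotProduct, A, Matrix.of_apply] at this
    rw [Polynomial.coeff_sub, map_sum, Polynomial.finsetSum_coeff, ← this, sub_eq_zero]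
    refine Finset.sum_congr rfl fun x _ => ?_
    rw [map_mul, ev_C, Polynomial.coeff_C_mul, mul_comm]

/-! ### Forms modulo the cube of the plane -/

lemma X_cube_dvd_iff {σ : Type} {k : σ} {F : MvPolynomial σ K} :
    X k ^ 3 ∣ F ↔ ∀ e : σ →₀ ℕ, e k < 3 → coeff e F = 0 := by
  classical
  have hle : ∀ e : σ →₀ ℕ, Finsupp.single k 3 ≤ e ↔ ¬ e k < 3 := fun e => by
    rw [Finsupp.single_le_iff, not_lt]
  rw [X_pow_eq_monomial, monomial_one_dvd_iff_modMonomial_eq_zero]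
  constructor
  · intro h e he
    rw [← coeff_modMonomial_of_not_le (s := Finsupp.single k 3) F (by rw [hle]; simpa using he), h,
      coeff_zero]
  · intro h
    ext e
    by_cases he : e k < 3
    · rw [coeff_modMonomial_of_not_le F (by rw [hle]; simpa using he), h e he, coeff_zero]
    · rw [coeff_modMonomial_of_le F ((hle e).2 he), coeff_zero]

lemma isHomogeneous_of_X_cube_mul {σ : Type} {k : σ} {t : ℕ} {G : MvPolynomial σ K}
    (h : (X k ^ 3 * G).IsHomogeneous (t + 3)) : G.IsHomogeneous t := by
  intro e he
  have h1 : coeff (Finsupp.single k 3 + e) (X k ^ 3 * G) ≠ 0 := by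
    rwa [X_pow_eq_monomial, coeff_monomial_mul, one_mul]
  have h2 := h h1
  rw [map_add, Finsupp.weight_single] at h2
  simp at h2
  omega

/-- The exponents of degree `T` of the monomials not divisible by `x₃³`. -/
def mons (T : ℕ) : Finset (Fin 4 →₀ ℕ) := {e ∈ Finset.univ.finsuppAntidiag T | e 3 < 3}

lemma mem_mons {T : ℕ} {e : Fin 4 →₀ ℕ} : e ∈ mons T ↔ e.degree = T ∧ e 3 < 3 := by
  simp [mons, Finset.mem_finsuppAntidiag, Finsupp.degree_eq_sum]

lemma card_mons_le (T : ℕ) (hT : 2 ≤ T) : 2 * (mons T).card ≤ 3 * (T * (T + 1)) + 2 := by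
  have h1 : (mons T).card ≤
      ((Finset.range 3).sigma fun d => (Finset.range (T + 1 - d)).sigma fun a =>
        Finset.range (T + 1 - d - a)).card := by
    refine Finset.card_le_card_of_injOn (fun e => ⟨e 3, e 1, e 2⟩) ?_ ?_
    · intro e he
      have := mem_mons.1 he
      simp [Finsupp.degree_eq_sum, Fin.sum_univ_four] at this
      simp
      omega
    · intro e he e' he' h
      have h3 := mem_mons.1 he
      have h3' := mem_mons.1 he'
      simp [Finsupp.degree_eq_sum, Fin.sum_univ_four] at h h3 h3'
      ext i
      fin_cases i <;> simp <;> omega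
  have h2 : ∀ n : ℕ, 2 * ((Finset.range n).sigma fun a => Finset.range (n - a)).card
      = n * (n + 1) := by
    intro n
    simp only [Finset.card_sigma, Finset.card_range]
    induction n with
    | zero => simp
    | succ n ih =>
      rw [Finset.sum_range_succ', Finset.sum_congr rfl fun a _ => by rw [Nat.succ_sub_succ_eq_sub]]
      simp only [Nat.sub_zero, mul_add] at ih ⊢
      rw [ih]
      ring
  rw [Finset.card_sigma, Finset.sum_range_succ, Finset.sum_range_succ, Finset.sum_range_one] at h1
  have e0 := h2 (T + 1 - 0)
  have e1 := h2 (T + 1 - 1)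
  have e2 := h2 (T + 1 - 2)
  obtain ⟨n, rfl⟩ : ∃ n, T = n + 2 := ⟨T - 2, by omega⟩
  rw [show n + 2 + 1 - 0 = n + 3 from rfl] at *
  rw [show n + 2 + 1 - 1 = n + 2 from rfl] at *
  rw [show n + 2 + 1 - 2 = n + 1 from rfl] at *
  nlinarith

/-- The form of degree `T` with prescribed coefficients on the monomials not divisible by `x₃³`. -/
def formOf (T : ℕ) : (mons T → K) →ₗ[K] Rp K where
  toFun f := ∑ e : mons T, monomial e.1 (f e)
  map_add' f g := by simp [Finset.sum_add_distrib]
  map_smul' a f := by simp [Finset.smul_sum, smul_monomial]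

lemma formOf_apply {T : ℕ} (f : mons T → K) : formOf T f = ∑ e : mons T, monomial e.1 (f e) := rfl

lemma coeff_formOf {T : ℕ} (f : mons T → K) (e : mons T) : coeff e.1 (formOf T f) = f e := by
  classical
  rw [formOf_apply, coeff_sum, Finset.sum_eq_single e]
  · simp
  · intro e' _ h
    rw [coeff_monomial, if_neg fun h' => h (Subtype.ext h')]
  · simp

lemma isHomogeneous_formOf {T : ℕ} (f : mons T → K) : (formOf T f).IsHomogeneous T :=
  IsHomogeneous.sum _ _ _ fun e _ => isHomogeneous_monomial _ (mem_mons.1 e.2).1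

lemma eq_zero_of_X3_cube_dvd_formOf {T : ℕ} {f : mons T → K} (h : X 3 ^ 3 ∣ formOf T f) :
    f = 0 := by
  funext e
  rw [← coeff_formOf f e]
  exact X_cube_dvd_iff.1 h _ (mem_mons.1 e.2).2

/-- Every form of degree `T` is congruent to one of the `formOf T f` modulo `x₃³`. -/
lemma X3_cube_dvd_sub_formOf {T : ℕ} {F : Rp K} (hF : F.IsHomogeneous T) :
    X 3 ^ 3 ∣ F - formOf T fun e => coeff e.1 F := by
  rw [X_cube_dvd_iff]
  intro e he
  by_cases h : e ∈ mons T
  · rw [coeff_sub, coeff_formOf _ ⟨e, h⟩, sub_self]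
  · have h' : e.degree ≠ T := fun h' => h (mem_mons.2 ⟨h', he⟩)
    rw [coeff_sub, hF.coeff_eq_zero h', (isHomogeneous_formOf _).coeff_eq_zero h', sub_self]

lemma X_cube_dvd_ev (q : Fin 4 → K) {F : Rp K} (h : X 3 ^ 3 ∣ F) :
    Polynomial.X ^ 3 ∣ ev q F := by
  simpa using map_dvd (ev q) h

/-- The matrix of the restriction of forms of degree `T` to the jets along a configuration. -/
def jetMatrix (T : ℕ) {ι : Type} (c : ι → Fin 4 → K) : Matrix (ι × Fin 3) (mons T) K :=
  Matrix.of fun y e => (ev (c y.1) (monomial e.1 1)).coeff y.2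

lemma jetMatrix_mulVec {T : ℕ} {ι : Type} (c : ι → Fin 4 → K) (f : mons T → K)
    (y : ι × Fin 3) : (jetMatrix T c).mulVec f y = (ev (c y.1) (formOf T f)).coeff y.2 := by
  rw [formOf_apply, map_sum, Polynomial.finsetSum_coeff, Matrix.mulVec, dotProduct]
  refine Finset.sum_congr rfl fun e _ => ?_
  rw [show monomial e.1 (f e) = C (f e) * monomial e.1 1 by rw [C_mul_monomial, mul_one], map_mul,
    ev_C, Polynomial.coeff_C_mul, mul_comm, jetMatrix, Matrix.of_apply]

lemma jetMatrix_mulVec_eq_zero {T : ℕ} {ι : Type} {c : ι → Fin 4 → K} {f : mons T → K} :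
    (jetMatrix T c).mulVec f = 0 ↔ ∀ i, Polynomial.X ^ 3 ∣ ev (c i) (formOf T f) := by
  simp only [funext_iff, jetMatrix_mulVec, Polynomial.X_pow_dvd_iff, Pi.zero_apply]
  exact ⟨fun h i d hd => h (i, ⟨d, hd⟩), fun h y => h y.1 y.2 y.2.2⟩

lemma injAt_iff {T : ℕ} {ι : Type} {c : ι → Fin 4 → K} :
    InjAt T c ↔ ∀ f : mons T → K, (∀ i, Polynomial.X ^ 3 ∣ ev (c i) (formOf T f)) → f = 0 := by
  refine ⟨fun h f hf => eq_zero_of_X3_cube_dvd_formOf (h _ (isHomogeneous_formOf f) hf),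
    fun h F hF hF' => ?_⟩
  have h1 := X3_cube_dvd_sub_formOf hF
  have h2 := h _ fun i => (dvd_iff_dvd_of_dvd_sub (map_sub (ev (c i)) F _ ▸
    X_cube_dvd_ev (c i) h1)).1 (hF' i)
  rwa [h2, map_zero, sub_zero] at h1

/-- Injectivity is an open condition: for a left inverse `B` of the jet matrix at `c₀`, the
determinant of `B` times the jet matrix is a polynomial in the configuration, equal to one at `c₀`. -/
lemma InjAt.gen {T : ℕ} {ι : Type} [Fintype ι] {c₀ : ι → Fin 4 → K} (h : InjAt T c₀) :
    Gen fun c : ι → Fin 4 → K => InjAt T c := by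
  classical
  obtain ⟨g, hg⟩ := LinearMap.exists_leftInverse_of_injective (jetMatrix T c₀).mulVecLin <| by
    rw [LinearMap.ker_eq_bot']
    intro f hf
    exact injAt_iff.1 h f (jetMatrix_mulVec_eq_zero.1 hf)
  let B : Matrix (mons T) (ι × Fin 3) K := LinearMap.toMatrix' g
  have hB : B * jetMatrix T c₀ = 1 := by
    have := congr_arg LinearMap.toMatrix' hg
    rwa [LinearMap.toMatrix'_comp, ← Matrix.toLin'_apply', LinearMap.toMatrix'_toLin', LinearMap.toMatrix'_id] at this
  obtain ⟨Δ, hΔ⟩ := exists_det_poly (A := fun c : ι → Fin 4 → K => B * jetMatrix T c)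
    fun x y => by
      choose D hD using fun z : ι × Fin 3 =>
        exists_coeff_poly (K := K) (monomial y.1 1) z.1 z.2
      refine ⟨∑ z, C (B x z) * D z, fun c => ?_⟩
      simp [Matrix.mul_apply, hD, jetMatrix]
  refine Gen.of_eval Δ c₀ (by rw [hΔ, hB, Matrix.det_one]; exact one_ne_zero) fun c hc => ?_
  rw [hΔ] at hc
  rw [injAt_iff]
  intro f hf
  refine Matrix.eq_zero_of_mulVec_eq_zero hc ?_
  rw [← Matrix.mulVec_mulVec, jetMatrix_mulVec_eq_zero.2 hf, Matrix.mulVec_zero]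

/-- The lines through the point `(0 : 0 : 0 : 1)` not contained in the plane `x₀ = 0` detect
divisibility by `x₃³`. -/
lemma injAt_all [Infinite K] (T : ℕ) :
    InjAt T (fun x : Fin 2 → K => (![x 0, x 1, 0, 0] : Fin 4 → K)) := by
  classical
  intro F hF h
  let g : Rp K →ₐ[K] Polynomial (MvPolynomial (Fin 2) K) :=
    aeval ![1, Polynomial.C (X 0), Polynomial.C (X 1), Polynomial.X]
  let m : (Fin 4 →₀ ℕ) → (Fin 2 →₀ ℕ) := fun e => Finsupp.single 0 (e 1) + Finsupp.single 1 (e 2)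
  have hm : ∀ (e : Fin 4 →₀ ℕ) (a : K), g (monomial e a)
      = Polynomial.C (monomial (m e) a) * Polynomial.X ^ (e 3) := by
    intro e a
    have : monomial (m e) a = C a * (X 0 ^ e 1 * X 1 ^ e 2) := by
      rw [X_pow_eq_monomial, X_pow_eq_monomial, monomial_mul, C_mul_monomial]
      simp [m]
    rw [this]
    simp only [g, aeval_monomial]
    rw [Finsupp.prod_fintype _ _ (by simp)]
    simp [Fin.prod_univ_four, MvPolynomial.algebraMap_eq]
    ring
  have h0 : ∀ d < 3, (g F).coeff d = 0 := by
    intro d hd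
    refine MvPolynomial.funext fun x => ?_
    have key : (Polynomial.mapAlgHom (aeval x : MvPolynomial (Fin 2) K →ₐ[K] K)).comp g
        = ev ![x 0, x 1, 0, 0] := by
      apply MvPolynomial.algHom_ext
      intro k
      fin_cases k <;> simp [g]
    have h1 := DFunLike.congr_fun key F
    have h2 := Polynomial.X_pow_dvd_iff.1 (h x) d hd
    rw [← h1] at h2
    simpa [MvPolynomial.coe_aeval_eq_eval] using h2
  rw [X_cube_dvd_iff]
  intro e he
  by_contra hne
  have hdeg : ∀ e : Fin 4 →₀ ℕ, coeff e F ≠ 0 → e 0 + e 1 + e 2 + e 3 = T := by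
    intro e' he'
    have : e'.degree = T := by
      by_contra hh
      exact he' (hF.coeff_eq_zero hh)
    simpa [Finsupp.degree_eq_sum, Fin.sum_univ_four] using this
  have h3 := congr_arg (coeff (m e)) (h0 _ he)
  rw [F.as_sum, map_sum, Polynomial.finsetSum_coeff, coeff_sum, Finset.sum_eq_single e] at h3
  · rw [hm] at h3
    simp at h3
    exact hne h3
  · intro e' he' hee
    rw [hm, Polynomial.coeff_C_mul, Polynomial.coeff_X_pow]
    split_ifs with h4
    · rw [mul_one, coeff_monomial, if_neg]
      intro h5
      apply hee
      have a1 := DFunLike.congr_fun h5 0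
      have a2 := DFunLike.congr_fun h5 1
      simp [m] at a1 a2
      have b := hdeg e hne
      have b' := hdeg e' (mem_support_iff.1 he')
      ext i
      fin_cases i <;> simp <;> omega
    · simp
  · intro hns
    exact absurd (notMem_support_iff.1 hns) hne

/-- If `T (T + 1) / 2` lines impose independent conditions, the forms satisfying all of them are,
modulo `x₃³`, the multiples of a single form, so one more line which does not satisfy this form to
third order gives injectivity. -/
lemma SurjAt.exists_injAt [Infinite K] {T : ℕ} (hT : 2 ≤ T) {ι : Type} [Fintype ι]
    {c : ι → Fin 4 → K} (hι : 2 * Fintype.card ι = T * (T + 1)) (h : SurjAt T c) :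
    ∃ c' : Option ι → Fin 4 → K, InjAt T c' := by
  have hsurj : LinearMap.range (jetMatrix T c).mulVecLin = ⊤ := by
    rw [LinearMap.range_eq_top]
    intro b
    obtain ⟨F, hF, hF'⟩ := h fun i => ∑ j : Fin 3, Polynomial.C (b (i, j)) * Polynomial.X ^ (j : ℕ)
    refine ⟨fun e => coeff e.1 F, ?_⟩
    funext y
    have h1 := dvd_sub (hF' y.1) (X_cube_dvd_ev (c y.1) (X3_cube_dvd_sub_formOf hF))
    rw [map_sub, sub_sub_sub_cancel_left] at h1
    have h2 := Polynomial.X_pow_dvd_iff.1 h1 y.2 y.2.2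
    rw [Polynomial.coeff_sub, sub_eq_zero] at h2
    rw [Matrix.mulVecLin_apply, jetMatrix_mulVec, h2]
    obtain ⟨i, j⟩ := y
    fin_cases j <;> simp [Fin.sum_univ_three, Polynomial.coeff_X, Polynomial.coeff_X_pow,
      Polynomial.coeff_C]
  have hker : finrank K (LinearMap.ker (jetMatrix T c).mulVecLin) ≤ 1 := by
    have h1 := LinearMap.finrank_range_add_finrank_ker (jetMatrix T c).mulVecLin
    rw [hsurj, finrank_top, finrank_fintype_fun_eq_card, finrank_fintype_fun_eq_card] at h1
    have h2 := card_mons_le T hT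
    simp only [Fintype.card_prod, Fintype.card_fin, Fintype.card_coe] at h1
    omega
  obtain ⟨v, hv⟩ := finrank_le_one_iff.1 hker
  -- a line which is not contained, to third order, in the form spanning the kernel
  obtain ⟨q, hq⟩ : ∃ q : Fin 4 → K, Polynomial.X ^ 3 ∣ ev q (formOf T v.1) → v = 0 := by
    by_contra! hall
    refine (hall 0).2 (Subtype.ext ?_)
    exact injAt_iff.1 (injAt_all T) v.1 fun x => (hall _).1
  refine ⟨fun o => o.elim q c, injAt_iff.2 fun f hf => ?_⟩
  obtain ⟨a, ha⟩ := hv ⟨f, jetMatrix_mulVec_eq_zero.2 fun i => hf (some i)⟩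
  have hf' : f = a • v.1 := (congr_arg Subtype.val ha).symm
  by_cases h0 : a = 0
  · rw [hf', h0, zero_smul]
  · have h1 : Polynomial.X ^ 3 ∣ ev q (formOf T f) := hf none
    have h2 : v.1 = a⁻¹ • f := by rw [hf', smul_smul, inv_mul_cancel₀ h0, one_smul]
    have h3 : v = 0 := hq <| by
      rw [h2, map_smul, map_smul, Polynomial.smul_eq_C_mul]
      exact h1.mul_left _
    rw [hf', h3]
    simp

lemma InjAt.exists_of_injective {T : ℕ} {ι κ : Type} {c : ι → Fin 4 → K} (h : InjAt T c)
    {e : ι → κ} (he : Function.Injective e) : ∃ c' : κ → Fin 4 → K, InjAt T c' := by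
  refine ⟨Function.extend e c 0, fun F hF hF' => h F hF fun i => ?_⟩
  simpa [he.extend_apply] using hF' (e i)

/-- In any degree `T ≥ 2`, any number of generic lines impose the expected number of conditions
modulo `x₃³`. -/
lemma gen_maxRank [CharZero K] (r T : ℕ) (hT : 2 ≤ T) :
    Gen fun c : Fin r → Fin 4 → K => SurjAt T c ∨ InjAt T c := by
  obtain ⟨ι, _, c, hc, h⟩ := exists_surjAt (K := K) T hT
  rcases le_or_gt r (Fintype.card ι) with hr | hr
  · obtain ⟨Δ, h0, hΔ⟩ := (h.comp (((Fintype.equivFin ι).symm.injective).comp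
      (Fin.castLE_injective hr))).gen
    exact ⟨Δ, h0, fun c hc => Or.inl (hΔ c hc)⟩
  · obtain ⟨c', hc'⟩ := h.exists_injAt hT hc
    obtain ⟨e⟩ : Nonempty (Option ι ↪ Fin r) :=
      Function.Embedding.nonempty_of_card_le (by simpa using hr)
    obtain ⟨c'', hc''⟩ := hc'.exists_of_injective e.injective
    obtain ⟨Δ, h0, hΔ⟩ := hc''.gen
    exact ⟨Δ, h0, fun c hc => Or.inr (hΔ c hc)⟩

/-- The determinant of the four linear forms cutting out two lines, up to sign. -/
def skewDet (p q : Fin 4 → K) : K := (p 0 - q 0) * (p 3 - q 3) - (p 1 - q 1) * (p 2 - q 2)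

lemma gen_skew {ι : Type} {i j : ι} (hij : i ≠ j) :
    Gen fun c : ι → Fin 4 → K => skewDet (c i) (c j) ≠ 0 := by
  classical
  refine Gen.of_eval ((X (i, 0) - X (j, 0)) * (X (i, 3) - X (j, 3))
    - (X (i, 1) - X (j, 1)) * (X (i, 2) - X (j, 2)))
    (fun k => if k = i then ![1, 0, 0, 1] else 0) ?_ fun c hc => by simpa [skewDet] using hc
  simp [hij.symm]

/-- A configuration which is generic in every degree simultaneously.  Finitely many degrees suffice,
as independence of conditions persists in higher degrees. -/
lemma exists_config [CharZero K] (r : ℕ) : ∃ c : Fin r → Fin 4 → K,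
    (∀ i j, i ≠ j → skewDet (c i) (c j) ≠ 0) ∧ ∀ t : ℕ, SurjAt (t + 3) c ∨ InjAt (t + 3) c := by
  have h1 : Gen fun c : Fin r → Fin 4 → K => SurjAt (r + 2) c := by
    obtain ⟨ι, _, c, hc, h⟩ := exists_surjAt (K := K) (r + 2) (by omega)
    have hr : r ≤ Fintype.card ι := by nlinarith
    exact (h.comp (((Fintype.equivFin ι).symm.injective).comp (Fin.castLE_injective hr))).gen
  have h2 : Gen fun c : Fin r → Fin 4 → K => ∀ t ∈ Finset.range r,
      SurjAt (t + 3) c ∨ InjAt (t + 3) c :=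
    Gen.forall_mem _ fun t _ => gen_maxRank r (t + 3) (by omega)
  have h3 : Gen fun c : Fin r → Fin 4 → K =>
      ∀ p ∈ (Finset.univ : Finset (Fin r × Fin r)).filter fun p => p.1 ≠ p.2,
        skewDet (c p.1) (c p.2) ≠ 0 :=
    Gen.forall_mem _ fun p hp => gen_skew (Finset.mem_filter.1 hp).2
  obtain ⟨c, ⟨hc1, hc2⟩, hc3⟩ := ((h1.and h2).and h3).exists
  refine ⟨c, fun i j hij => hc3 (i, j) (by simpa using hij), fun t => ?_⟩
  by_cases ht : t < r
  · exact hc2 t (Finset.mem_range.2 ht)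
  · exact Or.inl (hc1.mono (by omega))


/-! ### Lines and the Hartshorne–Rao module -/

/-- The first linear form of the line encoded by `q`. -/
def formA (q : Fin 4 → K) : Rp K := X 1 - C (q 0) * X 0 - C (q 2) * X 3

/-- The second linear form of the line encoded by `q`. -/
def formB (q : Fin 4 → K) : Rp K := X 2 - C (q 1) * X 0 - C (q 3) * X 3

/-- The ideal of the line encoded by `q`. -/
def lineIdeal (q : Fin 4 → K) : Ideal (Rp K) := Ideal.span {formA q, formB q}

lemma isHomogeneous_formA (q : Fin 4 → K) : (formA q).IsHomogeneous 1 :=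
  ((isHomogeneous_X _ _).sub ((isHomogeneous_X _ _).C_mul _)).sub ((isHomogeneous_X _ _).C_mul _)

lemma isHomogeneous_formB (q : Fin 4 → K) : (formB q).IsHomogeneous 1 :=
  ((isHomogeneous_X _ _).sub ((isHomogeneous_X _ _).C_mul _)).sub ((isHomogeneous_X _ _).C_mul _)

lemma ev_eq_zero_of_mem {q : Fin 4 → K} {F : Rp K} (h : F ∈ lineIdeal q) : ev q F = 0 := by
  have : lineIdeal q ≤ RingHom.ker (ev q) := by
    rw [lineIdeal, Ideal.span_le]
    rintro _ (rfl | rfl) <;> simp [formA, formB, RingHom.mem_ker]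
  exact this h

/-- Restriction to the line `q`, in homogeneous coordinates `(x₀, x₃)`. -/
def restr (q : Fin 4 → K) : Rp K →ₐ[K] MvPolynomial (Fin 2) K :=
  aeval ![X 0, C (q 0) * X 0 + C (q 2) * X 1, C (q 1) * X 0 + C (q 3) * X 1, X 1]

/-- Binary forms viewed as forms in the variables `x₀, x₃`. -/
def extend03 : MvPolynomial (Fin 2) K →ₐ[K] Rp K := rename ![0, 3]

lemma sub_extend_restr_mem (q : Fin 4 → K) (F : Rp K) :
    F - extend03 (restr q F) ∈ lineIdeal q := by
  rw [← Ideal.Quotient.eq]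
  have key : ((Ideal.Quotient.mkₐ K (lineIdeal q)).comp extend03).comp (restr q)
      = Ideal.Quotient.mkₐ K (lineIdeal q) := by
    apply MvPolynomial.algHom_ext
    intro k
    have hA : formA q ∈ lineIdeal q := Ideal.subset_span (by simp)
    have hB : formB q ∈ lineIdeal q := Ideal.subset_span (by simp)
    fin_cases k
    · simp [restr, extend03]
    · refine Eq.symm (Ideal.Quotient.eq.2 ?_)
      convert hA using 1
      simp [restr, extend03, formA]
      ring
    · refine Eq.symm (Ideal.Quotient.eq.2 ?_)
      convert hB using 1
      simp [restr, extend03, formB]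
      ring
    · simp [restr, extend03]
  exact (DFunLike.congr_fun key F).symm

lemma isHomogeneous_restr {q : Fin 4 → K} {n : ℕ} {F : Rp K} (hF : F.IsHomogeneous n) :
    (restr q F).IsHomogeneous n := by
  have hl : ∀ a b : K, (C a * X 0 + C b * X 1 : MvPolynomial (Fin 2) K).IsHomogeneous 1 :=
    fun a b => ((isHomogeneous_X _ _).C_mul _).add ((isHomogeneous_X _ _).C_mul _)
  rw [← one_mul n]
  refine hF.aeval _ fun k => ?_
  fin_cases k
  · exact isHomogeneous_X _ _
  · exact hl _ _
  · exact hl _ _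
  · exact isHomogeneous_X _ _

/-- A binary form is determined by its dehomogenization. -/
lemma coeff_restr {q : Fin 4 → K} {n : ℕ} {F : Rp K} (hF : F.IsHomogeneous n) (e : Fin 2 →₀ ℕ)
    (he : e.degree = n) : coeff e (restr q F) = (ev q F).coeff (e 1) := by
  classical
  have key : (aeval ![1, Polynomial.X] : MvPolynomial (Fin 2) K →ₐ[K] Polynomial K).comp (restr q)
      = ev q := by
    apply MvPolynomial.algHom_ext
    intro k
    fin_cases k <;> simp [restr, ← MvPolynomial.algebraMap_eq, ← Polynomial.algebraMap_eq]
  have hG := isHomogeneous_restr (q := q) hF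
  rw [← key, AlgHom.comp_apply]
  generalize restr q F = G at hG
  conv_rhs => rw [G.as_sum]
  have hm : ∀ e' : Fin 2 →₀ ℕ, (aeval ![1, Polynomial.X] (monomial e' (coeff e' G))).coeff (e 1)
      = if e 1 = e' 1 then coeff e' G else 0 := by
    intro e'
    rw [aeval_monomial, Finsupp.prod_fintype _ _ (by simp)]
    simp [Fin.prod_univ_two, Polynomial.algebraMap_eq, Polynomial.coeff_X_pow]
  rw [map_sum, Polynomial.finsetSum_coeff, Finset.sum_eq_single e]
  · rw [hm, if_pos rfl]
  · intro e' he' hee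
    rw [hm, if_neg]
    intro h1
    apply hee
    have h2 : e'.degree = n := by
      by_contra hh
      exact mem_support_iff.1 he' (hG.coeff_eq_zero hh)
    simp [Finsupp.degree_eq_sum] at he h2
    ext i
    fin_cases i <;> simp <;> omega
  · intro hns
    rw [hm, if_pos rfl, notMem_support_iff.1 hns]

lemma mem_lineIdeal_of_ev {q : Fin 4 → K} {n : ℕ} {F : Rp K} (hF : F.IsHomogeneous n)
    (h : ev q F = 0) : F ∈ lineIdeal q := by
  have h0 : restr q F = 0 := by
    ext e
    by_cases he : e.degree = n
    · rw [coeff_restr hF e he, h, Polynomial.coeff_zero, coeff_zero]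
    · rw [(isHomogeneous_restr hF).coeff_eq_zero he, coeff_zero]
  simpa [h0] using sub_extend_restr_mem q F

lemma exists_mul_sub_mem {q : Fin 4 → K} {t : ℕ} {F : Rp K} (hF : F.IsHomogeneous (t + 3))
    (h : Polynomial.X ^ 3 ∣ ev q F) :
    ∃ H : Rp K, H.IsHomogeneous t ∧ F - X 3 ^ 3 * H ∈ lineIdeal q := by
  have hd : X 1 ^ 3 ∣ restr q F := by
    rw [X_cube_dvd_iff]
    intro e he
    by_cases hdeg : e.degree = t + 3
    · rw [coeff_restr hF e hdeg]
      exact Polynomial.X_pow_dvd_iff.1 h _ he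
    · exact (isHomogeneous_restr hF).coeff_eq_zero hdeg
  obtain ⟨G, hG⟩ := hd
  have hGt : G.IsHomogeneous t :=
    isHomogeneous_of_X_cube_mul (k := 1) (hG ▸ isHomogeneous_restr hF)
  refine ⟨extend03 G, hGt.rename_isHomogeneous, ?_⟩
  have := sub_extend_restr_mem q F
  rw [hG] at this
  simpa [extend03] using this

lemma homogeneousComponent_mem_lineIdeal {q : Fin 4 → K} {F : Rp K} (h : F ∈ lineIdeal q) (n : ℕ) :
    homogeneousComponent n F ∈ lineIdeal q := by
  let _ := MvPolynomial.gradedAlgebra (σ := Fin 4) (R := K)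
  refine homogeneousComponent_mem_of_mem (Ideal.homogeneous_span _ _ ?_) h n
  rintro _ (rfl | rfl)
  · exact ⟨1, isHomogeneous_formA q⟩
  · exact ⟨1, isHomogeneous_formB q⟩

/-- The class in the Hartshorne–Rao module of a family of polynomials. -/
def cls {ι : Type} (P : ι → Ideal (Rp K)) (H : ι → Rp K) : HRmod P :=
  (LinearMap.range (Phi P)).mkQ fun i => (P i).mkQ (H i)

lemma mem_HRcomp {ι : Type} {P : ι → Ideal (Rp K)} {t : ℕ} {x : HRmod P} :
    x ∈ HRcomp P t ↔ ∃ H : ι → Rp K, (∀ i, (H i).IsHomogeneous t) ∧ cls P H = x := by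
  constructor
  · rintro ⟨z, hz, rfl⟩
    choose H hH hHz using fun i => hz i trivial
    refine ⟨H, hH, ?_⟩
    rw [show z = fun i => (P i).mkQ (H i) from funext fun i => (hHz i).symm]
    rfl
  · rintro ⟨H, hH, rfl⟩
    exact ⟨fun i => (P i).mkQ (H i), fun i _ => ⟨H i, hH i, rfl⟩, rfl⟩

lemma cls_eq_iff {ι : Type} {P : ι → Ideal (Rp K)} {A B : ι → Rp K} :
    cls P A = cls P B ↔ ∃ G : Rp K, ∀ i, A i - B i - G ∈ P i := by
  rw [cls, cls, Submodule.mkQ_apply, Submodule.mkQ_apply, Submodule.Quotient.eq]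
  constructor
  · rintro ⟨G, hG⟩
    refine ⟨G, fun i => ?_⟩
    rw [← Ideal.Quotient.eq]
    exact (congr_fun hG i).symm
  · rintro ⟨G, hG⟩
    exact ⟨G, funext fun i => (Ideal.Quotient.eq.2 (hG i)).symm⟩

lemma smul_cls {ι : Type} {P : ι → Ideal (Rp K)} (a : Rp K) (H : ι → Rp K) :
    a • cls P H = cls P fun i => a * H i := rfl

lemma cls_zero {ι : Type} (P : ι → Ideal (Rp K)) : cls P 0 = 0 := by
  exact map_zero ((LinearMap.range (Phi P)).mkQ)

/-- The snake lemma for multiplication by `x₃³` on `0 → I → R → ⊕ R/Pᵢ → M → 0`: the map on `M` is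
injective or surjective as soon as its counterpart `R/x₃³ → ⊕ R/(Pᵢ, x₃³)` is. -/
lemma maxRankPow {ι : Type} {c : ι → Fin 4 → K}
    (h : ∀ t : ℕ, SurjAt (t + 3) c ∨ InjAt (t + 3) c) :
    MaxRankPow (fun i => lineIdeal (c i)) (X 3) 3 := by
  intro t
  rcases h t with h | h
  · right
    intro y hy
    obtain ⟨A, hA, rfl⟩ := mem_HRcomp.1 hy
    obtain ⟨G, hG, hGA⟩ := h fun i => ev (c i) (A i)
    choose H hH hH' using fun i => exists_mul_sub_mem (hG.sub (hA i)) (q := c i)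
      (by rw [map_sub]; exact hGA i)
    refine ⟨cls _ (-H), mem_HRcomp.2 ⟨-H, fun i => (hH i).neg, rfl⟩, ?_⟩
    rw [smul_cls, cls_eq_iff]
    refine ⟨-G, fun i => ?_⟩
    convert hH' i using 1
    simp
    ring
  · left
    intro x hx h0
    obtain ⟨H, hH, rfl⟩ := mem_HRcomp.1 hx
    rw [smul_cls, ← cls_zero, cls_eq_iff] at h0
    obtain ⟨G, hG⟩ := h0
    have hG' : ∀ i, X 3 ^ 3 * H i - homogeneousComponent (t + 3) G ∈ lineIdeal (c i) := by
      intro i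
      have h1 : (X 3 ^ 3 * H i).IsHomogeneous (t + 3) := by
        rw [add_comm]
        exact (isHomogeneous_X_pow _ _).mul (hH i)
      have h2 := homogeneousComponent_mem_lineIdeal (hG i) (t + 3)
      simpa [homogeneousComponent_of_mem ((mem_homogeneousSubmodule _ _).2 h1)] using h2
    have hev : ∀ i, ev (c i) (homogeneousComponent (t + 3) G)
        = Polynomial.X ^ 3 * ev (c i) (H i) := by
      intro i
      have := ev_eq_zero_of_mem (hG' i)
      rw [map_sub, sub_eq_zero] at this
      simpa using this.symm
    obtain ⟨G', hG''⟩ := h _ (homogeneousComponent_isHomogeneous _ G) fun i => ⟨_, hev i⟩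
    have hhom : G'.IsHomogeneous t :=
      isHomogeneous_of_X_cube_mul (k := 3) (hG'' ▸ homogeneousComponent_isHomogeneous _ G)
    rw [← cls_zero, cls_eq_iff]
    refine ⟨G', fun i => mem_lineIdeal_of_ev (n := t) ?_ ?_⟩
    · simpa using (hH i).sub hhom
    · have := hev i
      rw [hG'', map_mul, map_pow, ev_X3] at this
      have := mul_left_cancel₀ (pow_ne_zero 3 Polynomial.X_ne_zero) this
      simp [this]

/-! ### Linear forms of the lines -/

lemma linearIndependent_forms (q : Fin 4 → K) : LinearIndependent K ![formA q, formB q] := by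
  rw [LinearIndependent.pair_iff]
  intro s t h
  have h1 := congr_arg (eval (![0, 1, 0, 0] : Fin 4 → K)) h
  have h2 := congr_arg (eval (![0, 0, 1, 0] : Fin 4 → K)) h
  simp [formA, formB, smul_eval] at h1 h2
  exact ⟨h1, h2⟩

/-- Disjointness: Cramer's rule expresses the coordinates through the four forms of two lines with
`skewDet` nonzero. -/
lemma span_forms_eq {p q : Fin 4 → K} (h : skewDet p q ≠ 0) :
    Submodule.span K {formA p, formB p, formA q, formB q} = homogeneousSubmodule (Fin 4) K 1 := by
  apply le_antisymm
  · rw [Submodule.span_le]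
    rintro _ (rfl | rfl | rfl | rfl)
    exacts [isHomogeneous_formA _, isHomogeneous_formB _, isHomogeneous_formA _,
      isHomogeneous_formB _]
  · rw [homogeneousSubmodule_one_eq_span_X, Submodule.span_le]
    set V := Submodule.span K {formA p, formB p, formA q, formB q} with hV
    have m1 : formA p ∈ V := Submodule.subset_span (by simp)
    have m2 : formB p ∈ V := Submodule.subset_span (by simp)
    have m3 : formA q ∈ V := Submodule.subset_span (by simp)
    have m4 : formB q ∈ V := Submodule.subset_span (by simp)
    have e1 : C (p 0 - q 0) * X 0 + C (p 2 - q 2) * X 3 ∈ V := by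
      convert V.sub_mem m3 m1 using 1
      simp only [formA, map_sub]
      ring
    have e2 : C (p 1 - q 1) * X 0 + C (p 3 - q 3) * X 3 ∈ V := by
      convert V.sub_mem m4 m2 using 1
      simp only [formB, map_sub]
      ring
    have x0 : X 0 ∈ V := by
      rw [← Submodule.smul_mem_iff V h]
      convert V.sub_mem (V.smul_mem (p 3 - q 3) e1) (V.smul_mem (p 2 - q 2) e2) using 1
      simp only [skewDet, smul_eq_C_mul, map_sub, map_mul]
      ring
    have x3 : X 3 ∈ V := by
      rw [← Submodule.smul_mem_iff V h]
      convert V.sub_mem (V.smul_mem (p 0 - q 0) e2) (V.smul_mem (p 1 - q 1) e1) using 1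
      simp only [skewDet, smul_eq_C_mul, map_sub, map_mul]
      ring
    have x1 : X 1 ∈ V := by
      convert V.add_mem m1 (V.add_mem (V.smul_mem (p 0) x0) (V.smul_mem (p 2) x3)) using 1
      simp only [formA, smul_eq_C_mul]
      ring
    have x2 : X 2 ∈ V := by
      convert V.add_mem m2 (V.add_mem (V.smul_mem (p 1) x0) (V.smul_mem (p 3) x3)) using 1
      simp only [formB, smul_eq_C_mul]
      ring
    rintro _ ⟨k, rfl⟩
    fin_cases k
    exacts [x0, x1, x2, x3]

/-- For every `r ≥ 1` there exist `r` pairwise disjoint (skew) lines in `ℙ³` and a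
linear form `L` such that multiplication by `L³` on the Hartshorne–Rao module of
their union has maximal rank in every degree (WLP); existential formulation of the
statement for general skew lines. -/
theorem stmt_11 {K : Type} [Field K] [IsAlgClosed K] [CharZero K]
    (r : ℕ) (hr : 1 ≤ r) :
    ∃ (l l' : Fin r → Rp K) (L : Rp K),
      (∀ i, l i ∈ homogeneousSubmodule (Fin 4) K 1) ∧
      (∀ i, l' i ∈ homogeneousSubmodule (Fin 4) K 1) ∧
      (∀ i, LinearIndependent K ![l i, l' i]) ∧
      -- pairwise skew: the four linear forms of two distinct lines span `[R]₁`
      (∀ i j, i ≠ j →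
        Submodule.span K {l i, l' i, l j, l' j} = homogeneousSubmodule (Fin 4) K 1) ∧
      L ∈ homogeneousSubmodule (Fin 4) K 1 ∧ L ≠ 0 ∧
      MaxRankPow (fun i => Ideal.span {l i, l' i}) L 3 := by
  obtain ⟨c, hskew, hrank⟩ := exists_config (K := K) r
  exact ⟨fun i => formA (c i), fun i => formB (c i), X 3, fun i => isHomogeneous_formA _,
    fun i => isHomogeneous_formB _, fun i => linearIndependent_forms _,
    fun i j hij => span_forms_eq (hskew i j hij), isHomogeneous_X _ _, X_ne_zero 3,
    maxRankPow hrank⟩
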